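/- arXiv:1902.04527 — 2 statements merged into one kernel-verified Lean document; each statement's English description precedes it below -/
import Mathlib

section
/- Let $m,n\ge 1$ and let $y=(y_1,\dots,y_m)\in\mathbb{R}^{mn}$ (each $y_i\in\mathbb{R}^n$) be such that $y_k\ne 0$ for some $1\le k\le m$ and $y_i=0$ for all $k+1\le i\le m$. Then for every $f\in L^{\vec p}(\mathbb{R}^{mn})$, where $\vec p=(p_1,\dots,p_m)$ with $1\le p_i<\infty$ for all $i$, one has $\lim_{a\to\infty}\|f(\cdot-ay)+f\|_{L^{\vec p}} = 2^{1/p_k}\,\|f\|_{L^{\vec p}}$. -/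
open MeasureTheory ENNReal NNReal

namespace Paper

noncomputable def lpNorm {α : Type*} [MeasurableSpace α] (μ : Measure α) (p : ℝ≥0∞)
    (f : α → ℝ≥0∞) : ℝ≥0∞ :=
  if p = ∞ then essSup f μ else (∫⁻ a, f a ^ p.toReal ∂μ) ^ (1 / p.toReal)

noncomputable def mixedNorm : (m : ℕ) → (n : Fin m → ℕ) → (p : Fin m → ℝ≥0∞) →
    (((i : Fin m) → EuclideanSpace ℝ (Fin (n i))) → ℝ≥0∞) → ℝ≥0∞
  | 0, _, _, f => f finZeroElim
  | m + 1, n, p, f =>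
    mixedNorm m (fun i => n i.succ) (fun i => p i.succ)
      (fun xs => lpNorm volume (p 0)
        (fun x0 => f (Fin.cons (α := fun i => EuclideanSpace ℝ (Fin (n i))) x0 xs)))

/-!
The idea is to cut `f` off in the variable `x_k` only. Write `f = f₁ + f₂`, where `f₁` is the
restriction of `f` to the slab `‖x_k‖ ≤ R`.

* For `a` so large that `‖a y_k‖ > 2 R`, the functions `f₁(· - a y)` and `f₁` live over disjoint
  sets of `x_k`. The inner norms over `x_1, …, x_{k-1}` then simply add up, the `L^{p_k}`-norm
  produces the factor `2 ^ (1 / p_k)`, and the outer norms do not notice the translation, as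
  `y_i = 0` for `i > k`. So `‖f₁(· - a y) + f₁‖ = 2 ^ (1 / p_k) ‖f₁‖` exactly
  (`mixedNorm_translate_add`).
* `‖f₂‖ → 0` as `R → ∞`, by dominated convergence in each variable in turn
  (`tendsto_mixedNorm_zero`).

Minkowski's inequality (`mixedNorm_add_le`) and translation invariance (`mixedNorm_translate`)
then bound the difference between `‖f(· - a y) + f‖` and `2 ^ (1 / p_k) ‖f‖` by a constant multiple
of `‖f₂‖`. All estimates are carried out on `ℝ≥0∞`-valued functions.
-/

section Lp

variable {α : Type*} [MeasurableSpace α] {μ : Measure α} {p : ℝ≥0∞}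

lemma one_le_toReal (hp : 1 ≤ p ∧ p < ⊤) : 1 ≤ p.toReal := by
  simpa using ENNReal.toReal_mono hp.2.ne hp.1

lemma lpNorm_eq (hp : 1 ≤ p ∧ p < ⊤) (F : α → ℝ≥0∞) :
    lpNorm μ p F = (∫⁻ a, F a ^ p.toReal ∂μ) ^ (1 / p.toReal) := by
  simp [lpNorm, hp.2.ne]

lemma lpNorm_mono (hp : 1 ≤ p ∧ p < ⊤) {F G : α → ℝ≥0∞} (h : ∀ x, F x ≤ G x) :
    lpNorm μ p F ≤ lpNorm μ p G := by
  have h1 := one_le_toReal hp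
  rw [lpNorm_eq hp, lpNorm_eq hp]
  refine ENNReal.rpow_le_rpow (lintegral_mono fun x => ?_) (by positivity)
  exact ENNReal.rpow_le_rpow (h x) (by positivity)

lemma lpNorm_zero (hp : 1 ≤ p ∧ p < ⊤) : lpNorm μ p (fun _ => 0) = 0 := by
  have h1 := one_le_toReal hp
  have h0 : 0 < p.toReal := by positivity
  rw [lpNorm_eq hp]
  simp [ENNReal.zero_rpow_of_pos h0, h0]

lemma lpNorm_add_le (hp : 1 ≤ p ∧ p < ⊤) {F G : α → ℝ≥0∞} (hF : Measurable F)
    (hG : Measurable G) :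
    lpNorm μ p (fun x => F x + G x) ≤ lpNorm μ p F + lpNorm μ p G := by
  rw [lpNorm_eq hp, lpNorm_eq hp, lpNorm_eq hp]
  exact ENNReal.lintegral_Lp_add_le hF.aemeasurable hG.aemeasurable (one_le_toReal hp)

lemma lpNorm_const_mul (hp : 1 ≤ p ∧ p < ⊤) (c : ℝ≥0∞) {F : α → ℝ≥0∞} (hF : Measurable F) :
    lpNorm μ p (fun x => c * F x) = c * lpNorm μ p F := by
  have h1 := one_le_toReal hp
  have h0 : 0 < p.toReal := by positivity
  rw [lpNorm_eq hp, lpNorm_eq hp]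
  simp_rw [ENNReal.mul_rpow_of_nonneg _ _ h0.le]
  rw [lintegral_const_mul _ (hF.pow_const _), ENNReal.mul_rpow_of_nonneg _ _ (by positivity),
    ← ENNReal.rpow_mul, mul_one_div_cancel h0.ne', ENNReal.rpow_one]

/-- Finiteness of the norm makes `G` finite almost everywhere, so convergence of `F j` is only
required where `G` is finite. -/
lemma tendsto_lpNorm_zero (hp : 1 ≤ p ∧ p < ⊤) {F : ℕ → α → ℝ≥0∞} {G : α → ℝ≥0∞}
    (hF : ∀ j, Measurable (F j)) (hG : Measurable G) (hle : ∀ j x, F j x ≤ G x)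
    (hfin : lpNorm μ p G < ⊤)
    (hlim : ∀ x, G x < ⊤ → Filter.Tendsto (fun j => F j x) Filter.atTop (nhds 0)) :
    Filter.Tendsto (fun j => lpNorm μ p (F j)) Filter.atTop (nhds 0) := by
  have h1 := one_le_toReal hp
  have h0 : 0 < p.toReal := by positivity
  have h0' : 0 < 1 / p.toReal := by positivity
  rw [lpNorm_eq hp, ENNReal.rpow_lt_top_iff_of_pos h0'] at hfin
  simp_rw [lpNorm_eq hp]
  have key : Filter.Tendsto (fun j => ∫⁻ a, F j a ^ p.toReal ∂μ) Filter.atTop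
      (nhds (∫⁻ _, 0 ∂μ)) := by
    refine tendsto_lintegral_of_dominated_convergence (fun a => G a ^ p.toReal)
      (fun j => (hF j).pow_const _)
      (fun j => .of_forall fun x => ENNReal.rpow_le_rpow (hle j x) h0.le) hfin.ne ?_
    filter_upwards [ae_lt_top (hG.pow_const _) hfin.ne] with x hx
    rw [ENNReal.rpow_lt_top_iff_of_pos h0] at hx
    have := (hlim x hx).ennrpow_const p.toReal
    rwa [ENNReal.zero_rpow_of_pos h0] at this
  rw [lintegral_zero] at key
  have := key.ennrpow_const (1 / p.toReal)
  rwa [ENNReal.zero_rpow_of_pos h0'] at this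

/-- Two functions with disjoint supports and equal norms. -/
lemma lpNorm_add_of_disjoint (hp : 1 ≤ p ∧ p < ⊤) {F G : α → ℝ≥0∞} (hF : Measurable F)
    (hFG : ∀ x, F x = 0 ∨ G x = 0)
    (heq : ∫⁻ a, F a ^ p.toReal ∂μ = ∫⁻ a, G a ^ p.toReal ∂μ) :
    lpNorm μ p (fun x => F x + G x) = 2 ^ (1 / p.toReal) * lpNorm μ p G := by
  have h1 := one_le_toReal hp
  have h0 : 0 < p.toReal := by positivity
  have hpt : ∀ x, (F x + G x) ^ p.toReal = F x ^ p.toReal + G x ^ p.toReal := by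
    intro x
    rcases hFG x with h | h <;> simp [h, ENNReal.zero_rpow_of_pos h0]
  rw [lpNorm_eq hp, lpNorm_eq hp]
  simp_rw [hpt]
  rw [lintegral_add_left (hF.pow_const _), heq, ← two_mul,
    ENNReal.mul_rpow_of_nonneg _ _ (by positivity)]

end Lp

/-- The space `ℝ^{n_1} × ⋯ × ℝ^{n_m}` on which `mixedNorm m n p` integrates. -/
abbrev Sp (m : ℕ) (n : Fin m → ℕ) : Type := (i : Fin m) → EuclideanSpace ℝ (Fin (n i))

/-- `Fin.cons` with its dependent type fixed: put the innermost variable in front. -/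
abbrev consSp {m : ℕ} {n : Fin (m + 1) → ℕ} (x0 : EuclideanSpace ℝ (Fin (n 0)))
    (xs : Sp m fun i => n i.succ) : Sp (m + 1) n :=
  Fin.cons (α := fun i => EuclideanSpace ℝ (Fin (n i))) x0 xs

lemma consSp_sub {m : ℕ} {n : Fin (m + 1) → ℕ} (x0 : EuclideanSpace ℝ (Fin (n 0)))
    (xs : Sp m fun i => n i.succ) (v : Sp (m + 1) n) :
    consSp x0 xs - v = consSp (x0 - v 0) (xs - fun i : Fin m => v i.succ) := by
  funext i
  refine Fin.cases ?_ (fun j => ?_) i <;> rfl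

lemma measurable_consSp {m : ℕ} {n : Fin (m + 1) → ℕ} :
    Measurable fun z : EuclideanSpace ℝ (Fin (n 0)) × Sp m (fun i => n i.succ) =>
      consSp (n := n) z.1 z.2 := by
  refine measurable_pi_lambda _ fun i => ?_
  refine Fin.cases ?_ (fun j => ?_) i
  · exact measurable_fst
  · exact (measurable_pi_apply j).comp measurable_snd

/-- The innermost norm of `F`, as a function of the remaining variables. -/
noncomputable abbrev inner1 {m : ℕ} {n : Fin (m + 1) → ℕ} (p : ℝ≥0∞) (F : Sp (m + 1) n → ℝ≥0∞)
    (xs : Sp m fun i => n i.succ) : ℝ≥0∞ :=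
  lpNorm volume p fun x0 => F (consSp x0 xs)

lemma mixedNorm_succ {m : ℕ} {n : Fin (m + 1) → ℕ} (p : Fin (m + 1) → ℝ≥0∞)
    (F : Sp (m + 1) n → ℝ≥0∞) :
    mixedNorm (m + 1) n p F =
      mixedNorm m (fun i => n i.succ) (fun i => p i.succ) (inner1 (p 0) F) := rfl

section

variable {m : ℕ} {n : Fin (m + 1) → ℕ} {p : ℝ≥0∞} {F : Sp (m + 1) n → ℝ≥0∞}

lemma measurable_slice (hF : Measurable F) (xs : Sp m fun i => n i.succ) :
    Measurable fun x0 => F (consSp x0 xs) :=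
  hF.comp (measurable_consSp.comp (measurable_id.prodMk measurable_const))

lemma measurable_inner1 (hp : 1 ≤ p ∧ p < ⊤) (hF : Measurable F) : Measurable (inner1 p F) := by
  have : inner1 p F = fun xs => (∫⁻ x0, F (consSp x0 xs) ^ p.toReal) ^ (1 / p.toReal) :=
    funext fun xs => lpNorm_eq hp _
  rw [this]
  refine Measurable.pow_const ?_ _
  exact Measurable.lintegral_prod_left' ((hF.comp measurable_consSp).pow_const p.toReal)

lemma inner1_translate (hp : 1 ≤ p ∧ p < ⊤) (F : Sp (m + 1) n → ℝ≥0∞) (v : Sp (m + 1) n)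
    (xs : Sp m fun i => n i.succ) :
    inner1 p (fun x => F (x - v)) xs = inner1 p F (xs - fun i : Fin m => v i.succ) := by
  simp only [inner1, lpNorm_eq hp, consSp_sub]
  rw [lintegral_sub_right_eq_self
    (fun x0 => F (consSp x0 (xs - fun i : Fin m => v i.succ)) ^ p.toReal) (v 0)]

end

lemma mixedNorm_mono : ∀ {m : ℕ} {n : Fin m → ℕ} {p : Fin m → ℝ≥0∞}
    (_ : ∀ i, 1 ≤ p i ∧ p i < ⊤) {F G : Sp m n → ℝ≥0∞} (_ : ∀ x, F x ≤ G x),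
    mixedNorm m n p F ≤ mixedNorm m n p G
  | 0, _, _, _, _, _, h => h _
  | _ + 1, _, _, hp, _, _, h =>
    mixedNorm_mono (fun i => hp i.succ) fun _ => lpNorm_mono (hp 0) fun _ => h _

/-- Minkowski's inequality for mixed norms. -/
lemma mixedNorm_add_le : ∀ {m : ℕ} {n : Fin m → ℕ} {p : Fin m → ℝ≥0∞}
    (_ : ∀ i, 1 ≤ p i ∧ p i < ⊤) {F G : Sp m n → ℝ≥0∞} (_ : Measurable F) (_ : Measurable G),
    mixedNorm m n p (fun x => F x + G x) ≤ mixedNorm m n p F + mixedNorm m n p G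
  | 0, _, _, _, _, _, _, _ => le_rfl
  | m + 1, n, p, hp, F, G, hF, hG => by
    simp only [mixedNorm_succ]
    refine le_trans (mixedNorm_mono (fun i => hp i.succ)
      (G := fun xs => inner1 (p 0) F xs + inner1 (p 0) G xs) fun xs => ?_)
      (mixedNorm_add_le (fun i => hp i.succ) (measurable_inner1 (hp 0) hF)
        (measurable_inner1 (hp 0) hG))
    exact lpNorm_add_le (hp 0) (measurable_slice hF xs) (measurable_slice hG xs)

lemma mixedNorm_const_mul : ∀ {m : ℕ} {n : Fin m → ℕ} {p : Fin m → ℝ≥0∞}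
    (_ : ∀ i, 1 ≤ p i ∧ p i < ⊤) (c : ℝ≥0∞) {F : Sp m n → ℝ≥0∞} (_ : Measurable F),
    mixedNorm m n p (fun x => c * F x) = c * mixedNorm m n p F
  | 0, _, _, _, _, _, _ => rfl
  | m + 1, n, p, hp, c, F, hF => by
    simp only [mixedNorm_succ]
    rw [← mixedNorm_const_mul (fun i => hp i.succ) c (measurable_inner1 (hp 0) hF)]
    congr 1
    funext xs
    exact lpNorm_const_mul (hp 0) c (measurable_slice hF xs)

lemma mixedNorm_translate : ∀ {m : ℕ} {n : Fin m → ℕ} {p : Fin m → ℝ≥0∞}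
    (_ : ∀ i, 1 ≤ p i ∧ p i < ⊤) (F : Sp m n → ℝ≥0∞) (v : Sp m n),
    mixedNorm m n p (fun x => F (x - v)) = mixedNorm m n p F
  | 0, _, _, _, F, _ => congrArg F (funext fun i => i.elim0)
  | m + 1, n, p, hp, F, v => by
    simp only [mixedNorm_succ]
    rw [← mixedNorm_translate (fun i => hp i.succ) (inner1 (p 0) F) fun i => v i.succ]
    congr 1
    funext xs
    exact inner1_translate (hp 0) F v xs

/-- Dominated convergence for mixed norms. Asking for `F j x → 0` only where `G x` is finite makes
the hypothesis pass to the inner norms, so that the induction on the number of variables goes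
through without almost-everywhere quantifiers. -/
lemma tendsto_mixedNorm_zero : ∀ {m : ℕ} {n : Fin m → ℕ} {p : Fin m → ℝ≥0∞}
    (_ : ∀ i, 1 ≤ p i ∧ p i < ⊤) {F : ℕ → Sp m n → ℝ≥0∞} {G : Sp m n → ℝ≥0∞}
    (_ : ∀ j, Measurable (F j)) (_ : Measurable G) (_ : ∀ j x, F j x ≤ G x)
    (_ : mixedNorm m n p G < ⊤)
    (_ : ∀ x, G x < ⊤ → Filter.Tendsto (fun j => F j x) Filter.atTop (nhds 0)),
    Filter.Tendsto (fun j => mixedNorm m n p (F j)) Filter.atTop (nhds 0)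
  | 0, _, _, _, _, _, _, _, _, hfin, hlim => hlim _ hfin
  | m + 1, n, p, hp, F, G, hF, hG, hle, hfin, hlim => by
    simp only [mixedNorm_succ] at hfin ⊢
    refine tendsto_mixedNorm_zero (fun i => hp i.succ) (fun j => measurable_inner1 (hp 0) (hF j))
      (measurable_inner1 (hp 0) hG) (fun j xs => lpNorm_mono (hp 0) fun _ => hle j _) hfin ?_
    intro xs hxs
    exact tendsto_lpNorm_zero (hp 0) (fun j => measurable_slice (hF j) xs)
      (measurable_slice hG xs) (fun j _ => hle j _) hxs fun x0 hx => hlim _ hx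

/-- If `F` is supported in `{x | x k ∈ S}` and `S` is disjoint from its translate by `v k`, then
adding to `F` its translate by `v` multiplies the norm by `2 ^ (1 / p k)`. The induction peels off
the variables before the `k`-th one: their norms are additive here because, for given outer
variables, one of the two summands vanishes identically. -/
lemma mixedNorm_translate_add : ∀ {m : ℕ} {n : Fin m → ℕ} {p : Fin m → ℝ≥0∞}
    (_ : ∀ i, 1 ≤ p i ∧ p i < ⊤) {F : Sp m n → ℝ≥0∞} (_ : Measurable F) (k : Fin m)
    (v : Sp m n) (_ : ∀ i, k < i → v i = 0) (S : Set (EuclideanSpace ℝ (Fin (n k))))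
    (_ : ∀ x, x k ∉ S → F x = 0) (_ : ∀ z ∈ S, z - v k ∉ S),
    mixedNorm m n p (fun x => F (x - v) + F x) = 2 ^ (1 / (p k).toReal) * mixedNorm m n p F
  | 0, _, _, _, _, _, k, _, _, _, _, _ => k.elim0
  | m + 1, n, p, hp, F, hF, k, v, hv, S, hS, hd => by
    have hFv : Measurable fun x => F (x - v) := hF.comp (measurable_id.sub_const v)
    simp only [mixedNorm_succ]
    induction k using Fin.cases with
    | zero =>
      rw [← mixedNorm_const_mul (fun i => hp i.succ) _ (measurable_inner1 (hp 0) hF)]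
      congr 1
      funext xs
      have hv0 : (fun i : Fin m => v i.succ) = 0 := funext fun i => hv _ (Fin.succ_pos i)
      refine lpNorm_add_of_disjoint (hp 0) (measurable_slice hFv xs) (fun x0 => ?_) ?_
      · by_cases hx : x0 ∈ S
        · exact Or.inl (hS _ (hd x0 hx))
        · exact Or.inr (hS _ hx)
      · simp only [consSp_sub, hv0, sub_zero]
        exact lintegral_sub_right_eq_self (fun x0 => F (consSp x0 xs) ^ (p 0).toReal) (v 0)
    | succ j =>
      rw [← mixedNorm_translate_add (fun i => hp i.succ) (measurable_inner1 (hp 0) hF) j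
        (fun i => v i.succ) (fun i hi => hv _ (Fin.succ_lt_succ_iff.2 hi)) S ?_ hd]
      · congr 1
        funext xs
        rw [← inner1_translate (hp 0)]
        by_cases hx : xs j ∈ S
        · have h : ∀ x0, F (consSp x0 xs - v) = 0 := fun x0 => hS _ (hd _ hx)
          simp only [inner1, h, zero_add, lpNorm_zero (hp 0)]
        · have h : ∀ x0, F (consSp x0 xs) = 0 := fun x0 => hS _ hx
          simp only [inner1, h, add_zero, lpNorm_zero (hp 0)]
      · intro xs hx
        have h : ∀ x0, F (consSp x0 xs) = 0 := fun x0 => hS _ hx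
        simp only [inner1, h, lpNorm_zero (hp 0)]

/-- Lemma 2.3: for `y = (y₁,…,y_m)` with `y_k ≠ 0` and `y_i = 0` for `i > k`, and any
`f ∈ L^{\vec p}` with `1 ≤ p_i < ∞`, one has
`lim_{a→∞} ‖f(·-ay) + f‖_{L^{\vec p}} = 2^{1/p_k} ‖f‖_{L^{\vec p}}`. -/
theorem translation_limit
    (m n : ℕ) (hm : 1 ≤ m) (hn : 1 ≤ n)
    (p : Fin m → ℝ≥0∞) (hp : ∀ i, 1 ≤ p i ∧ p i < ⊤)
    (y : Fin m → EuclideanSpace ℝ (Fin n)) (k : Fin m)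
    (hyk : y k ≠ 0) (hy : ∀ i : Fin m, k < i → y i = 0)
    (f : (Fin m → EuclideanSpace ℝ (Fin n)) → ℝ) (hfm : Measurable f)
    (hf : mixedNorm m (fun _ => n) p (fun x => (‖f x‖₊ : ℝ≥0∞)) < ⊤) :
    Filter.Tendsto
      (fun a : ℝ =>
        mixedNorm m (fun _ => n) p (fun x => (‖f (x - a • y) + f x‖₊ : ℝ≥0∞)))
      Filter.atTop
      (nhds ((2 : ℝ≥0∞) ^ (1 / (p k).toReal)
        * mixedNorm m (fun _ => n) p (fun x => (‖f x‖₊ : ℝ≥0∞)))) := by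
  set F : Sp m (fun _ => n) → ℝ≥0∞ := fun x => (‖f x‖₊ : ℝ≥0∞) with hFdef
  set N := mixedNorm m (fun _ => n) p with hN
  set c : ℝ≥0∞ := (2 : ℝ≥0∞) ^ (1 / (p k).toReal) with hc
  have hcfin : c ≠ ⊤ := ENNReal.rpow_ne_top_of_nonneg (by positivity) (by simp)
  have hFm : Measurable F := hfm.nnnorm.coe_nnreal_ennreal
  -- `A R` is the slab `‖x_k‖ ≤ R`, and `F₁ R`, `F₂ R` are the parts of `|f|` inside and outside.
  let A : ℕ → Set (Sp m fun _ => n) := fun R => {x | ‖x k‖ ≤ R}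
  have hA : ∀ R, MeasurableSet (A R) := fun R =>
    measurableSet_le (measurable_pi_apply k).norm measurable_const
  let F₁ : ℕ → Sp m (fun _ => n) → ℝ≥0∞ := fun R => (A R).indicator F
  let F₂ : ℕ → Sp m (fun _ => n) → ℝ≥0∞ := fun R => (A R)ᶜ.indicator F
  have hF₁ : ∀ R, Measurable (F₁ R) := fun R => hFm.indicator (hA R)
  have hF₂ : ∀ R, Measurable (F₂ R) := fun R => hFm.indicator (hA R).compl
  have hsum : ∀ R x, F x = F₁ R x + F₂ R x := fun R x =>
    (congrFun (Set.indicator_self_add_compl (A R) F) x).symm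
  have htail : Filter.Tendsto (fun R => N (F₂ R)) Filter.atTop (nhds 0) := by
    refine tendsto_mixedNorm_zero hp hF₂ hFm (fun R x => Set.indicator_le_self _ _ _) hf ?_
    intro x _
    refine tendsto_const_nhds.congr' ?_
    filter_upwards [Filter.eventually_ge_atTop ⌈‖x k‖⌉₊] with R hR
    have : x ∈ A R := Nat.ceil_le.1 hR
    simp [F₂, this]
  have htail' : Filter.Tendsto (fun R => (2 + c) * N (F₂ R)) Filter.atTop (nhds 0) := by
    simpa using ENNReal.Tendsto.const_mul htail (Or.inr (by finiteness : 2 + c ≠ ⊤))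
  rw [ENNReal.tendsto_nhds (ENNReal.mul_ne_top hcfin hf.ne)]
  intro ε hε
  obtain ⟨R, hR⟩ := ((tendsto_order.1 htail').2 ε hε).exists
  have hypos : 0 < ‖y k‖ := norm_pos_iff.2 hyk
  filter_upwards [Filter.eventually_gt_atTop (2 * R / ‖y k‖), Filter.eventually_ge_atTop 0]
    with a ha ha0
  have hlarge : 2 * (R : ℝ) < ‖a • y k‖ := by
    rw [norm_smul, Real.norm_of_nonneg ha0]
    exact (div_lt_iff₀ hypos).1 ha
  have hdisj : ∀ z : EuclideanSpace ℝ (Fin n), ‖z‖ ≤ R → ¬ ‖z - a • y k‖ ≤ R := by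
    intro z hz h
    have : ‖a • y k‖ ≤ ‖z‖ + ‖z - a • y k‖ := by
      simpa using norm_sub_le z (z - a • y k)
    linarith
  set v : Sp m (fun _ => n) := a • y with hv
  set G : Sp m (fun _ => n) → ℝ≥0∞ := fun x => (‖f (x - v) + f x‖₊ : ℝ≥0∞) with hG
  have hsub : Measurable fun x : Sp m (fun _ => n) => x - v := measurable_id.sub_const v
  have hGm : Measurable G := ((hfm.comp hsub).add hfm).nnnorm.coe_nnreal_ennreal
  have hF₁s : Measurable fun x => F₁ R (x - v) + F₁ R x := ((hF₁ R).comp hsub).add (hF₁ R)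
  have hF₂s : Measurable fun x => F₂ R (x - v) + F₂ R x := ((hF₂ R).comp hsub).add (hF₂ R)
  have hmain : N (fun x => F₁ R (x - v) + F₁ R x) = c * N (F₁ R) := by
    refine mixedNorm_translate_add hp (hF₁ R) k v (fun i hi => by simp [hv, hy i hi])
      {z | ‖z‖ ≤ R} (fun x (hx : x ∉ A R) => Set.indicator_of_notMem hx _) fun z hz => hdisj z hz
  have herr : N (fun x => F₂ R (x - v) + F₂ R x) ≤ 2 * N (F₂ R) := by
    refine (mixedNorm_add_le hp ((hF₂ R).comp hsub) (hF₂ R)).trans (le_of_eq ?_)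
    rw [two_mul]
    congr 1
    exact mixedNorm_translate hp (F₂ R) v
  have htri : ∀ s t : ℝ, (‖t‖₊ : ℝ≥0∞) ≤ ‖s + t‖₊ + ‖s‖₊ := by
    intro s t
    have : ‖t‖₊ ≤ ‖s + t‖₊ + ‖s‖₊ := by simpa using nnnorm_sub_le (s + t) s
    exact_mod_cast this
  have hup : N G ≤ c * N (F₁ R) + 2 * N (F₂ R) := by
    refine (mixedNorm_mono hp fun x => ?_).trans
      ((mixedNorm_add_le hp hF₁s hF₂s).trans (add_le_add hmain.le herr))
    calc G x ≤ F (x - v) + F x := by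
          have := nnnorm_add_le (f (x - v)) (f x)
          simp only [hG, hFdef]
          exact_mod_cast this
      _ = _ := by rw [hsum R (x - v), hsum R x]; ring
  have hlow : c * N (F₁ R) ≤ N G + 2 * N (F₂ R) := by
    rw [← hmain]
    refine (mixedNorm_mono hp fun x => ?_).trans
      ((mixedNorm_add_le hp hGm hF₂s).trans (add_le_add le_rfl herr))
    by_cases hx : x ∈ A R
    · have hxv : x - v ∉ A R := hdisj (x k) hx
      simp only [F₁, F₂, Set.indicator_of_mem hx, Set.indicator_of_notMem hxv,
        Set.indicator_of_mem (Set.mem_compl hxv),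
        Set.indicator_of_notMem (Set.notMem_compl_iff.2 hx), zero_add, add_zero]
      exact htri _ _
    · by_cases hxv : x - v ∈ A R
      · simp only [F₁, F₂, Set.indicator_of_mem hxv, Set.indicator_of_notMem hx,
          Set.indicator_of_mem (Set.mem_compl hx),
          Set.indicator_of_notMem (Set.notMem_compl_iff.2 hxv), zero_add, add_zero]
        simp only [hG, hFdef, add_comm (f (x - v))]
        exact htri _ _
      · simp only [F₁, Set.indicator_of_notMem hx, Set.indicator_of_notMem hxv, add_zero]
        exact zero_le
  have hF₁le : N (F₁ R) ≤ N F := mixedNorm_mono hp fun x => Set.indicator_le_self _ _ _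
  have hFle : N F ≤ N (F₁ R) + N (F₂ R) := by
    have h : F = fun x => F₁ R x + F₂ R x := funext (hsum R)
    calc N F = N (fun x => F₁ R x + F₂ R x) := congrArg N h
      _ ≤ _ := mixedNorm_add_le hp (hF₁ R) (hF₂ R)
  constructor
  · rw [tsub_le_iff_right]
    calc c * N F ≤ c * (N (F₁ R) + N (F₂ R)) := by gcongr
      _ = c * N (F₁ R) + c * N (F₂ R) := mul_add _ _ _
      _ ≤ N G + 2 * N (F₂ R) + c * N (F₂ R) := by gcongr
      _ = N G + (2 + c) * N (F₂ R) := by ring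
      _ ≤ N G + ε := by gcongr
  · calc N G ≤ c * N (F₁ R) + 2 * N (F₂ R) := hup
      _ ≤ c * N F + (2 + c) * N (F₂ R) := by
          gcongr
          exact le_self_add
      _ ≤ c * N F + ε := by gcongr

end Paper
end

section
/- Let $n_1,n_2\ge 1$ and let $A$ be an invertible $(n_1+n_2)\times(n_1+n_2)$ real matrix, written in block form $A=\begin{pmatrix}A_1&A_2\\A_3&A_4\end{pmatrix}$ where $A_1$ is $n_1\times n_2$, $A_2$ is $n_1\times n_1$, $A_3$ is $n_2\times n_2$ and $A_4$ is $n_2\times n_1$; write $A^{-1}=\begin{pmatrix}\tilde A_1&\tilde A_2\\\tilde A_3&\tilde A_4\end{pmatrix}$ where $\tilde A_1$ is $n_2\times n_1$, $\tilde A_2$ is $n_2\times n_2$, $\tilde A_3$ is $n_1\times n_1$ and $\tilde A_4$ is $n_1\times n_2$. Then: (i) $A_3$ is invertible if and only if $\tilde A_3$ is invertible; (ii) if $\tilde A_3$ is invertible, then $\tilde A_2-\tilde A_1\tilde A_3^{-1}\tilde A_4$ is invertible and $(\tilde A_2-\tilde A_1\tilde A_3^{-1}\tilde A_4)^{-1}\,\tilde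 A_1\,\tilde A_3^{-1}=-A_4$; and (iii) if $n_1=n_2$, then $A_3$ and $A_4$ are both invertible if and only if $\tilde A_1$ and $\tilde A_3$ are both invertible. -/
/-!
The proof compares blocks in `A * B = 1`, notably `A₃ B₁ + A₄ B₃ = 0` and `A₃ B₂ + A₄ B₄ = 1`.
If `B₃` is invertible, the first gives `A₄ = -A₃ B₁ B₃⁻¹`, and the second becomes
`A₃ (B₂ - B₁ B₃⁻¹ B₄) = 1`: thus `A₃` is invertible and is the inverse of the Schur complement of
`B₃`. Similarly, by `A₁ B₁ + A₂ B₃ = 1`, if `A₃` is invertible, the Schur complement `A₂ - A₁ A₃⁻¹ A₄` is a left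
inverse of `B₃`. For square blocks, `A₃ B₁ = -A₄ B₃` has invertible outer factors `A₃` and `B₃` as
soon as one of them is invertible, so `A₄` is then invertible exactly when `B₁` is.
-/

namespace Paper

/-- Lemma 4.2: block structure of the inverse matrix.  Here
`A = fromBlocks A₁ A₂ A₃ A₄` with `A₁ : n₁×n₂`, `A₂ : n₁×n₁`, `A₃ : n₂×n₂`, `A₄ : n₂×n₁`,
and its inverse `B = fromBlocks B₁ B₂ B₃ B₄` with `B₁ : n₂×n₁`, `B₂ : n₂×n₂`,
`B₃ : n₁×n₁`, `B₄ : n₁×n₂`. -/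
theorem inverse_block_structure
    (n₁ n₂ : ℕ) (hn₁ : 1 ≤ n₁) (hn₂ : 1 ≤ n₂)
    (A₁ : Matrix (Fin n₁) (Fin n₂) ℝ) (A₂ : Matrix (Fin n₁) (Fin n₁) ℝ)
    (A₃ : Matrix (Fin n₂) (Fin n₂) ℝ) (A₄ : Matrix (Fin n₂) (Fin n₁) ℝ)
    (B₁ : Matrix (Fin n₂) (Fin n₁) ℝ) (B₂ : Matrix (Fin n₂) (Fin n₂) ℝ)
    (B₃ : Matrix (Fin n₁) (Fin n₁) ℝ) (B₄ : Matrix (Fin n₁) (Fin n₂) ℝ)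
    (hAB : Matrix.fromBlocks A₁ A₂ A₃ A₄ * Matrix.fromBlocks B₁ B₂ B₃ B₄ = 1)
    (hBA : Matrix.fromBlocks B₁ B₂ B₃ B₄ * Matrix.fromBlocks A₁ A₂ A₃ A₄ = 1) :
    (IsUnit A₃.det ↔ IsUnit B₃.det) ∧
    (IsUnit B₃.det →
      IsUnit (B₂ - B₁ * B₃⁻¹ * B₄).det ∧
      (B₂ - B₁ * B₃⁻¹ * B₄)⁻¹ * B₁ * B₃⁻¹ = -A₄) ∧
    (∀ h : n₁ = n₂,
      (IsUnit A₃.det ∧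
        IsUnit (Matrix.det (A₄.submatrix id (Fin.cast h.symm)))) ↔
      (IsUnit (Matrix.det (B₁.submatrix id (Fin.cast h.symm))) ∧
        IsUnit B₃.det)) := by
  rw [Matrix.fromBlocks_multiply, ← Matrix.fromBlocks_one, Matrix.fromBlocks_inj] at hAB
  obtain ⟨h11, -, h21, h22⟩ := hAB
  have hA₄ (hB : IsUnit B₃.det) : A₃ * B₁ * B₃⁻¹ = -A₄ := by
    rw [eq_neg_of_add_eq_zero_left h21, Matrix.neg_mul, Matrix.mul_nonsing_inv_cancel_right _ _ hB]
  have hSchur (hB : IsUnit B₃.det) : A₃ * (B₂ - B₁ * B₃⁻¹ * B₄) = 1 := by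
    rw [Matrix.mul_sub, ← Matrix.mul_assoc, ← Matrix.mul_assoc, hA₄ hB, Matrix.neg_mul,
      sub_neg_eq_add, h22]
  have hiff : IsUnit A₃.det ↔ IsUnit B₃.det := by
    refine ⟨fun hA => ?_, fun hB => Matrix.isUnit_det_of_right_inverse (hSchur hB)⟩
    have hB₁ : B₁ = -(A₃⁻¹ * A₄ * B₃) := by
      rw [Matrix.mul_assoc, eq_neg_of_add_eq_zero_right h21, Matrix.mul_neg, neg_neg,
        Matrix.nonsing_inv_mul_cancel_left _ _ hA]
    have hinv : (A₂ - A₁ * A₃⁻¹ * A₄) * B₃ = 1 := by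
      rw [← h11, hB₁, Matrix.sub_mul, Matrix.mul_neg, sub_eq_neg_add]
      simp only [Matrix.mul_assoc]
    exact Matrix.isUnit_det_of_left_inverse hinv
  refine ⟨hiff, fun hB => ⟨Matrix.isUnit_det_of_left_inverse (hSchur hB), ?_⟩, ?_⟩
  · rw [Matrix.inv_eq_left_inv (hSchur hB), hA₄ hB]
  · intro h
    subst h
    have hcast : (Fin.cast (rfl : n₁ = n₁)) = id := rfl
    simp only [hcast, Matrix.submatrix_id_id]
    have hmul : IsUnit A₃.det ∧ IsUnit B₁.det ↔ IsUnit A₄.det ∧ IsUnit B₃.det := by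
      rw [← IsUnit.mul_iff, ← IsUnit.mul_iff, ← Matrix.det_mul, ← Matrix.det_mul,
        ← Matrix.isUnit_iff_isUnit_det, ← Matrix.isUnit_iff_isUnit_det,
        eq_neg_of_add_eq_zero_left h21, IsUnit.neg_iff]
    tauto

end Paper
end
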